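/- The information distance E(x,y) = max{K(x|y), K(y|x)} satisfies the triangle inequality up to an additive constant: there exists a constant c ≥ 0 such that for all finite binary strings x, y, z, E(x,z) ≤ E(x,y) + E(y,z) + c. -/

import Mathlib

/-!
The information distance is a maximum of conditional complexities, so it suffices to show
`K(x|z) ≤ K(x|y) + K(y|z) + c`. This comes from running two programs in sequence: the composite
machine splits its program as `p₁ ++ p₂`, computes `y = U(p₁|z)` and outputs `U(p₂|y)`.
Since the halting programs of `U` are prefix-free for every condition, `p₁` is determined by any
extension of it, hence so are `y` and `p₂`; therefore the composite machine is single-valued and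
prefix-free. It is computable because the split can be found by an unbounded search over splits
and time bounds, and universality of `U` bounds the cost of simulating it by a constant.

As `K` is an infimum in `ℕ`, one also needs that programs exist at all (`exists_program`);
this holds because `U` simulates, for each `x`, the machine that outputs `x` on the empty program.
-/

/-- A prefix (self-delimiting) machine: a partial computable function taking a
program `p` and a conditional input `y`, whose halting programs form a
prefix-free set for each fixed conditional input. -/
structure PrefixMachine where
  eval : List Bool → List Bool →. List Bool
  partrec : Partrec₂ eval
  prefixFree : ∀ y p q : List Bool, (eval p y).Dom → (eval q y).Dom → p <+: q → p = q

/-- A universal prefix machine: it simulates every prefix machine with at most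
a constant additive overhead in program length. -/
structure UniversalPrefixMachine extends PrefixMachine where
  universal : ∀ M : PrefixMachine, ∃ c : ℕ, ∀ p y x : List Bool,
    x ∈ M.eval p y → ∃ q : List Bool, x ∈ eval q y ∧ q.length ≤ p.length + c

/-- Conditional Kolmogorov complexity `K(x|y)`: the length of a shortest
program `p` with `U(p|y) = x`. -/
noncomputable def K (U : UniversalPrefixMachine) (x y : List Bool) : ℕ :=
  sInf {n : ℕ | ∃ p : List Bool, p.length = n ∧ x ∈ U.eval p y}

/-- The information distance `E(x,y) = max {K(x|y), K(y|x)}`. -/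
noncomputable def E (U : UniversalPrefixMachine) (x y : List Bool) : ℕ :=
  max (K U x y) (K U y x)

/-- A partial computable function is the union of a sequence of computable stages `g (·, s)`, with
`none` for inputs on which the computation has not finished within the time bound `s`. -/
lemma exists_stages {α β : Type*} [Primcodable α] [Primcodable β] {f : α →. β} (hf : Partrec f) :
    ∃ g : α × ℕ → Option β, Computable g ∧ ∀ a b, b ∈ f a ↔ ∃ s, b ∈ g (a, s) := by
  obtain ⟨c, hc⟩ := Nat.Partrec.Code.exists_code.1 hf
  refine ⟨fun w => (Nat.Partrec.Code.evaln w.2 c (Encodable.encode w.1)).bind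
    fun n => (Encodable.decode n : Option β), ?_, fun a b => ?_⟩
  · refine Primrec.to_comp (Primrec.option_bind ?_ (Primrec.decode.comp Primrec.snd))
    exact Nat.Partrec.Code.primrec_evaln.comp
      (Primrec.pair (Primrec.pair Primrec.snd (Primrec.const c))
        (Primrec.encode.comp Primrec.fst))
  · have key : ∀ n, (∃ s, n ∈ Nat.Partrec.Code.evaln s c (Encodable.encode a)) ↔
        ∃ b', b' ∈ f a ∧ Encodable.encode b' = n := fun n => by
      rw [← Nat.Partrec.Code.evaln_complete, hc]
      simp
    constructor
    · intro h
      obtain ⟨s, hs⟩ := (key _).2 ⟨b, h, rfl⟩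
      exact ⟨s, Option.mem_bind_iff.2 ⟨_, hs, by simp⟩⟩
    · rintro ⟨s, hs⟩
      obtain ⟨n, hn, hb⟩ := Option.mem_bind_iff.1 hs
      obtain ⟨b', hb', rfl⟩ := (key n).1 ⟨s, hn⟩
      simp only [Encodable.encodek, Option.mem_def, Option.some.injEq] at hb
      exact hb ▸ hb'

/-- The graph of the sequential composition of `M` with itself. -/
def SeqRel (M : PrefixMachine) (p z x : List Bool) : Prop :=
  ∃ p₁ p₂ y, p₁ ++ p₂ = p ∧ y ∈ M.eval p₁ z ∧ x ∈ M.eval p₂ y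

/-- Prefix-freeness of `M` makes the split of a program unique, even between a program and an
extension of it. -/
lemma SeqRel.eq_of_prefix {M : PrefixMachine} {p q z x x' : List Bool}
    (hp : SeqRel M p z x) (hq : SeqRel M q z x') (hpq : p <+: q) : p = q ∧ x = x' := by
  obtain ⟨p₁, p₂, y, rfl, hy, hx⟩ := hp
  obtain ⟨q₁, q₂, y', rfl, hy', hx'⟩ := hq
  have hd := Part.dom_iff_mem.2 ⟨y, hy⟩
  have hd' := Part.dom_iff_mem.2 ⟨y', hy'⟩
  have h₁ : p₁ = q₁ := by
    rcases List.prefix_or_prefix_of_prefix ((List.prefix_append p₁ p₂).trans hpq)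
      (List.prefix_append q₁ q₂) with h | h
    · exact M.prefixFree z _ _ hd hd' h
    · exact (M.prefixFree z _ _ hd' hd h).symm
  subst h₁
  obtain rfl := Part.mem_unique hy hy'
  have h₂ : p₂ = q₂ := M.prefixFree y _ _ (Part.dom_iff_mem.2 ⟨x, hx⟩)
    (Part.dom_iff_mem.2 ⟨x', hx'⟩) ((List.prefix_append_right_inj p₁).1 hpq)
  subst h₂
  exact ⟨rfl, Part.mem_unique hx hx'⟩

lemma exists_seq_machine (M : PrefixMachine) :
    ∃ N : PrefixMachine, ∀ p z x, x ∈ N.eval p z ↔ SeqRel M p z x := by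
  obtain ⟨g, hg, hgM⟩ := exists_stages M.partrec
  -- A search index codes a split of the program and a time bound for each of the two runs.
  let h : List Bool × List Bool → ℕ → Option (List Bool) := fun a n =>
    (Encodable.decode n : Option ((List Bool × List Bool) × ℕ × ℕ)).bind fun w =>
      if w.1.1 ++ w.1.2 = a.1 then
        (g ((w.1.1, a.2), w.2.1)).bind fun y => g ((w.1.2, y), w.2.2)
      else none
  have hcomp : Computable₂ h := by
    refine Computable.option_bind (Computable.decode.comp Computable.snd) ?_
    have e₁ : Computable fun v : ((List Bool × List Bool) × ℕ) ×
        ((List Bool × List Bool) × ℕ × ℕ) => decide (v.2.1.1 ++ v.2.1.2 = v.1.1.1) := by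
      refine Primrec.to_comp ?_
      have : PrimrecPred fun v : ((List Bool × List Bool) × ℕ) ×
        ((List Bool × List Bool) × ℕ × ℕ) => v.2.1.1 ++ v.2.1.2 = v.1.1.1 :=
        Primrec.eq.comp
          (Primrec.list_append.comp (Primrec.fst.comp (Primrec.fst.comp Primrec.snd))
            (Primrec.snd.comp (Primrec.fst.comp Primrec.snd)))
          (Primrec.fst.comp (Primrec.fst.comp Primrec.fst))
      exact this.decide
    have e₂ : Computable fun v : ((List Bool × List Bool) × ℕ) ×
        ((List Bool × List Bool) × ℕ × ℕ) =>
        (g ((v.2.1.1, v.1.1.2), v.2.2.1)).bind fun y => g ((v.2.1.2, y), v.2.2.2) := by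
      refine Computable.option_bind (hg.comp ?_) (hg.comp ?_)
      · refine Primrec.to_comp (Primrec.pair (Primrec.pair ?_ ?_) ?_)
        · exact Primrec.fst.comp (Primrec.fst.comp Primrec.snd)
        · exact Primrec.snd.comp (Primrec.fst.comp Primrec.fst)
        · exact Primrec.fst.comp (Primrec.snd.comp Primrec.snd)
      · refine Primrec.to_comp (Primrec.pair (Primrec.pair ?_ Primrec.snd) ?_)
        · exact Primrec.snd.comp (Primrec.fst.comp (Primrec.snd.comp Primrec.fst))
        · exact Primrec.snd.comp (Primrec.snd.comp (Primrec.snd.comp Primrec.fst))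
    refine (Computable.cond e₁ e₂ (Computable.const none)).of_eq fun v => ?_
    by_cases hv : v.2.1.1 ++ v.2.1.2 = v.1.1.1 <;> simp [hv]
  have hsound : ∀ p z x n, x ∈ h (p, z) n → SeqRel M p z x := by
    intro p z x n hx
    obtain ⟨w, -, hw⟩ := Option.mem_bind_iff.1 hx
    split_ifs at hw with hs
    · obtain ⟨y, hy, hxy⟩ := Option.mem_bind_iff.1 hw
      exact ⟨_, _, y, hs, (hgM (w.1.1, z) y).2 ⟨_, hy⟩, (hgM (w.1.2, y) x).2 ⟨_, hxy⟩⟩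
    · simp at hw
  have hspec : ∀ p z x, x ∈ Nat.rfindOpt (h (p, z)) ↔ SeqRel M p z x := by
    intro p z x
    constructor
    · intro hx
      obtain ⟨n, hn⟩ := Nat.rfindOpt_spec hx
      exact hsound p z x n hn
    · intro hR
      obtain ⟨p₁, p₂, y, hs, hy, hx⟩ := id hR
      obtain ⟨s, hs₁⟩ := (hgM (p₁, z) y).1 hy
      obtain ⟨t, ht⟩ := (hgM (p₂, y) x).1 hx
      have hn : x ∈ h (p, z) (Encodable.encode ((p₁, p₂), s, t)) := by
        refine Option.mem_bind_iff.2 ⟨_, Encodable.encodek _, ?_⟩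
        simp only [hs, if_true]
        exact Option.mem_bind_iff.2 ⟨y, hs₁, ht⟩
      obtain ⟨x', hx'⟩ := Part.dom_iff_mem.1 (Nat.rfindOpt_dom.2 ⟨_, x, hn⟩)
      obtain ⟨n', hn'⟩ := Nat.rfindOpt_spec hx'
      -- The search may stop at another index, but the output does not depend on it.
      rwa [(hR.eq_of_prefix (hsound p z x' n' hn') List.prefix_rfl).2]
  refine ⟨⟨fun p z => Nat.rfindOpt (h (p, z)), Partrec.rfindOpt hcomp, ?_⟩, hspec⟩
  intro z p q hp hq hpq
  obtain ⟨x, hx⟩ := Part.dom_iff_mem.1 hp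
  obtain ⟨x', hx'⟩ := Part.dom_iff_mem.1 hq
  exact (((hspec p z x).1 hx).eq_of_prefix ((hspec q z x').1 hx') hpq).1

lemma exists_program (U : UniversalPrefixMachine) (x y : List Bool) :
    ∃ p, x ∈ U.eval p y := by
  -- This machine halts on the empty program only, with output `x`.
  let M : PrefixMachine :=
    { eval := fun p _ => Part.ofOption (if p = [] then some x else none)
      partrec := by
        refine Computable.ofOption (Primrec.to_comp ?_)
        exact Primrec.ite (Primrec.eq.comp Primrec.fst (Primrec.const []))
          (Primrec.const (some x)) (Primrec.const none)
      prefixFree := by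
        intro y p q hp hq _
        have : ∀ r : List Bool,
            (Part.ofOption (if r = [] then some x else none)).Dom → r = [] := by
          intro r hr
          by_contra hne
          simp [hne] at hr
        rw [this p hp, this q hq] }
  obtain ⟨c, hc⟩ := U.universal M
  obtain ⟨q, hq, -⟩ := hc [] y x (by simp [M])
  exact ⟨q, hq⟩

lemma exists_program_length_eq_K (U : UniversalPrefixMachine) (x y : List Bool) :
    ∃ p, p.length = K U x y ∧ x ∈ U.eval p y := by
  obtain ⟨p, hp⟩ := exists_program U x y
  exact Nat.sInf_mem (s := {n : ℕ | ∃ p : List Bool, p.length = n ∧ x ∈ U.eval p y})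
    ⟨_, p, rfl, hp⟩

lemma K_triangle (U : UniversalPrefixMachine) :
    ∃ c : ℕ, ∀ x y z : List Bool, K U x z ≤ K U x y + K U y z + c := by
  obtain ⟨N, hN⟩ := exists_seq_machine U.toPrefixMachine
  obtain ⟨c, hc⟩ := U.universal N
  refine ⟨c, fun x y z => ?_⟩
  obtain ⟨p₂, hl₂, hx⟩ := exists_program_length_eq_K U x y
  obtain ⟨p₁, hl₁, hy⟩ := exists_program_length_eq_K U y z
  obtain ⟨q, hq, hlen⟩ := hc (p₁ ++ p₂) z x ((hN _ _ _).2 ⟨p₁, p₂, y, rfl, hy, hx⟩)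
  have hK : K U x z ≤ q.length := Nat.sInf_le ⟨q, rfl, hq⟩
  rw [List.length_append] at hlen
  omega

/-- The information distance satisfies the triangle inequality up to an
additive constant. -/
theorem information_distance_triangle (U : UniversalPrefixMachine) :
    ∃ c : ℕ, ∀ x y z : List Bool, E U x z ≤ E U x y + E U y z + c := by
  obtain ⟨c, hc⟩ := K_triangle U
  refine ⟨c, fun x y z => ?_⟩
  have h₁ := hc x y z
  have h₂ := hc z y x
  unfold E
  omega
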